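/- Let T be a finite tree with vertex set V, let S ⊂ V be a k-antiresolving set of T with k ≥ 2, and let v ∈ S be a vertex with at least one neighbor outside S. For each integer j ≥ 1, let A_j be the set of vertices x ∈ V \ S such that dist_T(x, v) = j and v is the closest vertex of S to x. Then every nonempty A_j is an equivalence class of the equal-metric-representation relation on V \ S, and hence |A_j| ≥ k whenever A_j is nonempty. -/

import Mathlib

/-!
The idea is that, for `k ≥ 2`, every geodesic of the tree between two vertices of `S` stays
inside `S` (`mem_of_dist_add_dist_eq`). If `x ∉ S` were on the path from `s` to `t`, with
`s, t ∈ S`, then any vertex equivalent to `x` would lie on that same path at the same distance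
from `s`, hence would be `x` itself (`eq_of_dist_add_dist_eq`), and the class of `x` would be
a singleton.

Consequently, if `v` is a closest vertex of `S` to `x`, then for every `s ∈ S` the geodesic from
`x` to `v` (which meets `S` only at `v`) followed by the geodesic from `v` to `s` (contained in
`S`) is a path, so `dist x s = dist x v + dist v s` (`dist_eq_dist_add_dist`). The metric
representation of `x` is therefore determined by `v` and `dist x v`, and conversely the
representation determines both `dist x v` and whether `v` is closest.
-/

/-- Two vertices have the same metric representation with respect to `S`. -/
def sameRep {V : Type*} (G : SimpleGraph V) (S : Set V) (u w : V) : Prop :=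
  ∀ s ∈ S, G.dist u s = G.dist w s

/-- The equivalence class of `u` (among vertices outside `S`) under the
equal-metric-representation relation with respect to `S`. -/
def eqClass {V : Type*} (G : SimpleGraph V) (S : Set V) (u : V) : Set V :=
  {w | w ∉ S ∧ sameRep G S u w}

/-- `S` is a `k`-antiresolving set of `G`: `S` is a nonempty proper subset of the
vertex set, every equivalence class of the equal-metric-representation relation on
the complement of `S` has size at least `k`, and some class has size exactly `k`
(so `k` is the minimum class size). -/
def IsAntiresolving {V : Type*} (G : SimpleGraph V) (S : Set V) (k : ℕ) : Prop :=
  S.Nonempty ∧ S ≠ Set.univ ∧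
    (∀ u ∉ S, k ≤ (eqClass G S u).ncard) ∧
    (∃ u, u ∉ S ∧ (eqClass G S u).ncard = k)

/-- `G` is `k'`-metric antidimensional: `k'` is the largest positive integer such
that `G` has a `k'`-antiresolving set. -/
def IsMetricAntidimensional {V : Type*} (G : SimpleGraph V) (k' : ℕ) : Prop :=
  0 < k' ∧ (∃ S : Set V, IsAntiresolving G S k') ∧
    ∀ k : ℕ, (∃ S : Set V, IsAntiresolving G S k) → k ≤ k'

/-- In a tree every path is a geodesic. -/
lemma SimpleGraph.IsTree.length_eq_dist_of_isPath {V : Type*} {T : SimpleGraph V} (hT : T.IsTree)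
    {a b : V} {p : T.Walk a b} (hp : p.IsPath) : p.length = T.dist a b := by
  obtain ⟨q, hq, hlen⟩ := hT.connected.exists_path_of_dist a b
  have h := (hT.isAcyclic.subsingleton_path a b).elim ⟨p, hp⟩ ⟨q, hq⟩
  rw [Subtype.mk.injEq] at h
  rw [h, hlen]

/-- On a geodesic of a tree, a vertex is determined by its distance to one end. -/
lemma eq_of_dist_add_dist_eq {V : Type*} {T : SimpleGraph V} (hT : T.IsTree) {s t x y : V}
    (hx : T.dist s x + T.dist x t = T.dist s t) (hy : T.dist s y + T.dist y t = T.dist s t)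
    (hxy : T.dist s x = T.dist s y) : x = y := by
  obtain ⟨p₁, h₁⟩ := hT.connected.exists_walk_length_eq_dist s x
  obtain ⟨p₂, h₂⟩ := hT.connected.exists_walk_length_eq_dist x t
  obtain ⟨q₁, k₁⟩ := hT.connected.exists_walk_length_eq_dist s y
  obtain ⟨q₂, k₂⟩ := hT.connected.exists_walk_length_eq_dist y t
  have hp : (p₁.append p₂).IsPath := SimpleGraph.Walk.isPath_of_length_eq_dist _ (by
    rw [SimpleGraph.Walk.length_append, h₁, h₂, hx])
  have hq : (q₁.append q₂).IsPath := SimpleGraph.Walk.isPath_of_length_eq_dist _ (by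
    rw [SimpleGraph.Walk.length_append, k₁, k₂, hy])
  have h := (hT.isAcyclic.subsingleton_path s t).elim ⟨_, hp⟩ ⟨_, hq⟩
  rw [Subtype.mk.injEq] at h
  have hv := congrArg (fun w => w.getVert (T.dist s x)) h
  simpa [SimpleGraph.Walk.getVert_append, h₁, k₁, hxy] using hv

/-- Every vertex of `p` lies between the ends of `p` when `p` is a geodesic. -/
lemma dist_add_dist_of_mem_support {V : Type*} {T : SimpleGraph V} {a b w : V} {p : T.Walk a b}
    (hp : p.length = T.dist a b) (hc : T.Connected) (hw : w ∈ p.support) :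
    T.dist a w + T.dist w b = T.dist a b := by
  obtain ⟨q, r, rfl⟩ := SimpleGraph.Walk.mem_support_iff_exists_append.mp hw
  rw [SimpleGraph.Walk.length_append] at hp
  have hq := SimpleGraph.dist_le q
  have hr := SimpleGraph.dist_le r
  have := hc.dist_triangle (u := a) (v := w) (w := b)
  omega

/-- A set all of whose classes have at least two elements is geodesically convex. -/
lemma mem_of_dist_add_dist_eq {V : Type*} {T : SimpleGraph V} (hT : T.IsTree) {S : Set V}
    (hS : ∀ u ∉ S, 2 ≤ (eqClass T S u).ncard) {s t x : V} (hs : s ∈ S) (ht : t ∈ S)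
    (hx : T.dist s x + T.dist x t = T.dist s t) : x ∈ S := by
  by_contra hxS
  obtain ⟨y, ⟨-, hy⟩, hne⟩ := Set.exists_ne_of_one_lt_ncard (hS x hxS) x
  have hys : T.dist s x = T.dist s y := by
    rw [T.dist_comm (u := s) (v := x), hy s hs, T.dist_comm]
  have hyt := hy t ht
  exact hne (eq_of_dist_add_dist_eq hT hx (by omega) hys).symm

/-- Seen from a vertex whose closest vertex in `S` is `v`, all of `S` lies behind `v`. -/
lemma dist_eq_dist_add_dist {V : Type*} {T : SimpleGraph V} (hT : T.IsTree) {S : Set V}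
    (hS : ∀ u ∉ S, 2 ≤ (eqClass T S u).ncard) {v x s : V} (hv : v ∈ S) (hs : s ∈ S)
    (hx : ∀ w ∈ S, T.dist x v ≤ T.dist x w) :
    T.dist x s = T.dist x v + T.dist v s := by
  obtain ⟨p, hp, hpl⟩ := hT.connected.exists_path_of_dist x v
  obtain ⟨q, hq, hql⟩ := hT.connected.exists_path_of_dist v s
  have hpath : (p.append q).IsPath := by
    rw [SimpleGraph.Walk.isPath_def, SimpleGraph.Walk.support_append, List.nodup_append']
    refine ⟨hp.support_nodup, hq.support_nodup.tail, fun w hwp hwq => ?_⟩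
    have hwS : w ∈ S := mem_of_dist_add_dist_eq hT hS hv hs
      (dist_add_dist_of_mem_support hql hT.connected (List.mem_of_mem_tail hwq))
    have hadd := dist_add_dist_of_mem_support hpl hT.connected hwp
    have hle := hx w hwS
    have hwv : w = v := (hT.connected.dist_eq_zero_iff).mp (by omega)
    -- The start `v` of the path `q` does not reappear in its tail.
    have hnd := hq.support_nodup
    rw [← q.cons_tail_support] at hnd
    exact (List.nodup_cons.mp hnd).1 (hwv ▸ hwq)
  rw [← hT.length_eq_dist_of_isPath hpath, SimpleGraph.Walk.length_append, hpl, hql]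

/-- If `S` is a `k`-antiresolving set of a finite tree `T` with `k ≥ 2` and
`v ∈ S` has a neighbor outside `S`, then for every `j ≥ 1` the set `A_j` of
vertices outside `S` at distance `j` from `v` whose closest vertex in `S` is
`v`, if nonempty, is an equivalence class of the equal-metric-representation
relation on the complement of `S`, and hence has cardinality at least `k`. -/
theorem distance_layers_eqClass {V : Type*} [Fintype V] (T : SimpleGraph V)
    (hT : T.IsTree) (S : Set V) (k : ℕ) (hk : 2 ≤ k)
    (hS : IsAntiresolving T S k) (v : V) (hv : v ∈ S)
    (hnb : ∃ u, T.Adj v u ∧ u ∉ S) :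
    ∀ j : ℕ, 1 ≤ j →
      ∀ A : Set V,
        A = {x | x ∉ S ∧ T.dist x v = j ∧ ∀ w ∈ S, T.dist x v ≤ T.dist x w} →
        A.Nonempty →
        (∃ u, u ∉ S ∧ eqClass T S u = A) ∧ k ≤ A.ncard := by
  rintro j - A rfl ⟨x, hxS, hxj, hxv⟩
  have h2 : ∀ u ∉ S, 2 ≤ (eqClass T S u).ncard := fun u hu => hk.trans (hS.2.2.1 u hu)
  have hA : eqClass T S x =
      {x | x ∉ S ∧ T.dist x v = j ∧ ∀ w ∈ S, T.dist x v ≤ T.dist x w} := by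
    ext y
    constructor
    · rintro ⟨hyS, hxy⟩
      refine ⟨hyS, (hxy v hv).symm.trans hxj, fun w hw => ?_⟩
      rw [← hxy v hv, ← hxy w hw]
      exact hxv w hw
    · rintro ⟨hyS, hyj, hyv⟩
      refine ⟨hyS, fun s hs => ?_⟩
      rw [dist_eq_dist_add_dist hT h2 hv hs hxv, dist_eq_dist_add_dist hT h2 hv hs hyv, hxj, hyj]
  exact ⟨⟨x, hxS, hA⟩, hA ▸ hS.2.2.1 x hxS⟩
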